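/- There exist a natural number s₀ and a constant c > 0 such that for every integer a ≥ 2 and every integer N ≥ a^{s₀} the following holds: set s = ⌊log_a N⌋ and let λ be the largest real root of the polynomial x³ − (s+2)x² + s·x + (s+4). Then there exists M such that for all m ≥ M, f(a^m, N) ≥ c · 2^{−5·(log₂ log₂ N)²} · m^{log₂ λ}. -/

import Mathlib

/-! The argument builds many words with continuant `a ^ m` by folding and counts them through a
linear recursion.

*Folding.* Put `e = a² - 1`. If the word `e Q e` has continuant `a ^ k`, then `e Q c Qʳ e` has
continuant `a ^ (2k + j)`, where `Qʳ` is `Q` reversed and the block `c` is one of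
`e, a^j - 1, 1, e - 1` or `e - 1, 1, a^j - 1, e` when `1 ≤ j ≤ s`, and one of `e + 1, e - 1` or
`e - 1, e + 1` when `j = 0`
(`continuant_fold`). The entries stay below `N` because `a ^ j ≤ a ^ s ≤ N`. Both ends of the word
are `e` again, so folding can be iterated without any loss. The block `c` and the word `Q` can be
read off from `Q c Qʳ` (`fold_injective`), so the number `T m` of such words satisfies
`T m ≥ 2 ∑ T n`, the sum running over the `n` with `0 ≤ m - 2 n ≤ s` (`count_rec`).

*Growth.* Let `A` be the positive operator `(A g) m = 2 ∑ g n` over the same range of `n`. Then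
`A 1 = (s + 1) + δ χ` with `χ m = (-1) ^ m` and `δ ∈ {0, 1}`. The function `χ` changes sign under
the shift by `1`; if `g` changes sign under the shift by `q`, then `A g` does so under the shift
by `2 q`, and sums of `g` over intervals are at most `q sup |g|`. Hence `|A³ χ| ≤ 64`, while
`A³ 1 ≥ s³`. It follows that `A^(K+4) 1 ≥ (s + 1 - 64 / s³) A^(K+3) 1`, so that `T m` grows at
least like `μ ^ (log₂ m)` with `μ = s + 1 - 1 / s²` as soon as `s ≥ 64`.

*Comparison.* The cubic is positive on `[μ, ∞)`, so its largest root `λ` is strictly smaller than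
`μ`. The resulting gain `(μ / λ) ^ (log₂ m)` absorbs every constant depending on `a` and `N`, so
`c = 1` works. -/

/-- The continuant of a finite sequence of positive integers. -/
def continuant : List ℕ → ℕ
  | [] => 1
  | [a] => a
  | a :: b :: t => a * continuant (b :: t) + continuant t

/-- `f d N` is the number of finite sequences of positive integers, all entries `< N`,
whose continuant equals `d`. -/
noncomputable def f (d N : ℕ) : ℕ :=
  Set.ncard {l : List ℕ | (∀ x ∈ l, 0 < x ∧ x < N) ∧ continuant l = d}

/-- `lam` is the largest real root of the real function `p`. -/
def IsGreatestRoot (p : ℝ → ℝ) (lam : ℝ) : Prop :=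
  p lam = 0 ∧ ∀ x : ℝ, p x = 0 → x ≤ lam

/-! ### Continuants and folding -/

/-- The elementary matrix of a partial quotient. -/
def quotMat (x : ℕ) : Matrix (Fin 2) (Fin 2) ℕ := !![x, 1; 1, 0]

/-- The product of the elementary matrices along a word. -/
def wordMat (l : List ℕ) : Matrix (Fin 2) (Fin 2) ℕ := (l.map quotMat).prod

lemma wordMat_append (l l' : List ℕ) : wordMat (l ++ l') = wordMat l * wordMat l' := by
  simp [wordMat]

lemma wordMat_cons (x : ℕ) (l : List ℕ) : wordMat (x :: l) = quotMat x * wordMat l := by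
  simp [wordMat]

lemma wordMat_reverse (l : List ℕ) : wordMat l.reverse = (wordMat l).transpose := by
  induction l with
  | nil => simp [wordMat]
  | cons x l ih =>
    have hx : wordMat [x] = (quotMat x).transpose := by
      ext i j
      fin_cases i <;> fin_cases j <;> simp [wordMat, quotMat]
    rw [List.reverse_cons, wordMat_append, ih, hx, wordMat_cons, Matrix.transpose_mul]

lemma wordMat_entries : ∀ l : List ℕ, wordMat l 0 0 = continuant l ∧
    ∀ x, wordMat (x :: l) 1 0 = continuant l
  | [] => by simp [wordMat, quotMat, continuant]
  | [a] => by simp [wordMat, quotMat, continuant, Matrix.mul_apply]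
  | a :: b :: t => by
    have h1 := (wordMat_entries (b :: t)).1
    have h2 := (wordMat_entries t).2 b
    have h3 : wordMat (a :: b :: t) 0 0 = continuant (a :: b :: t) := by
      rw [wordMat_cons, Matrix.mul_apply, Fin.sum_univ_two, h1, h2]
      simp [quotMat, continuant]
    refine ⟨h3, fun x => ?_⟩
    rw [wordMat_cons, Matrix.mul_apply, Fin.sum_univ_two, h3]
    simp [quotMat]

lemma continuant_eq (l : List ℕ) : continuant l = wordMat l 0 0 := (wordMat_entries l).1.symm

/-- The four kinds of blocks that may be inserted in the middle of a fold. Here `d + 1` is the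
entry at which the word is folded, `b` is the factor gained, and the Boolean chooses between the
two orientations. -/
def foldBlock (d b : ℕ) (o : Bool) : List ℕ :=
  if b = 1 then (if o then [d + 2, d] else [d, d + 2])
  else (if o then [d + 1, b - 1, 1, d] else [d, 1, b - 1, d + 1])

/-- The quadratic form of a block is `b` times the square of the linear form `(d + 1) x + y`, and
this linear form takes the value `⟨P, d + 1⟩` at the first row of the matrix of `P`. -/
lemma continuant_fold (P : List ℕ) (d b : ℕ) (hb : 0 < b) (o : Bool) :
    continuant (P ++ foldBlock d b o ++ P.reverse) = b * continuant (P ++ [d + 1]) ^ 2 := by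
  obtain ⟨y, rfl⟩ : ∃ y, b = y + 1 := ⟨b - 1, by omega⟩
  simp only [continuant_eq, wordMat_append, wordMat_reverse]
  generalize wordMat P = X
  rcases Nat.eq_zero_or_pos y with rfl | hy
  · cases o <;>
      simp [foldBlock, wordMat, quotMat, Matrix.mul_apply, Fin.sum_univ_two] <;> ring
  · have hy' : y ≠ 0 := by omega
    cases o <;>
      simp [foldBlock, hy', wordMat, quotMat, Matrix.mul_apply, Fin.sum_univ_two] <;> ring

/-- A fold determines its factor, its orientation and the folded word. The hypothesis `2 ≤ d`
separates the blocks of length two from the middle of the blocks of length four, which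
contains a `1`. -/
lemma fold_injective {d b b' : ℕ} {o o' : Bool} {Q Q' : List ℕ} (hd : 2 ≤ d) (hb : 0 < b)
    (hb' : 0 < b')
    (h : Q ++ foldBlock d b o ++ Q.reverse = Q' ++ foldBlock d b' o' ++ Q'.reverse) :
    Q = Q' ∧ b = b' ∧ o = o' := by
  have key : ∀ {b b' : ℕ} {o o' : Bool} {Q Q' : List ℕ}, b = 1 → b' ≠ 1 →
      Q ++ foldBlock d b o ++ Q.reverse = Q' ++ foldBlock d b' o' ++ Q'.reverse → False := by
    intro b b' o o' Q Q' hb hb' h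
    have hl := congrArg List.length h
    have hlen : Q.length = Q'.length + 1 := by
      cases o <;> cases o' <;> simp [foldBlock, hb, hb'] at hl <;> omega
    obtain ⟨x, y, z, w, hxy, hc⟩ : ∃ x y z w, foldBlock d b' o' = [x, y, z, w] ∧
        (y = 1 ∨ z = 1) := by
      cases o' <;> simp [foldBlock, hb']
    have h2 : Q ++ (foldBlock d b o ++ Q.reverse) =
        (Q' ++ [x]) ++ ([y, z] ++ ([w] ++ Q'.reverse)) := by
      rw [← List.append_assoc, h, hxy]; simp
    have h3 := (List.append_inj h2 (by simp [hlen])).2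
    have h4 := (List.append_inj h3 (by cases o <;> simp [foldBlock, hb])).1
    cases o <;> simp [foldBlock, hb] at h4 <;> omega
  by_cases h1 : b = 1 <;> by_cases h1' : b' = 1
  · have hl := congrArg List.length h
    have hlen : Q.length = Q'.length := by
      cases o <;> cases o' <;> simp [foldBlock, h1, h1'] at hl <;> omega
    rw [List.append_assoc, List.append_assoc] at h
    obtain ⟨h2, h3⟩ := List.append_inj h hlen
    subst h2
    have h4 := List.append_cancel_right h3
    refine ⟨rfl, by omega, ?_⟩
    cases o <;> cases o' <;> simp [foldBlock, h1, h1'] at h4 ⊢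
  · exact (key h1 h1' h).elim
  · exact (key h1' h1 h.symm).elim
  · have hl := congrArg List.length h
    have hlen : Q.length = Q'.length := by
      cases o <;> cases o' <;> simp [foldBlock, h1, h1'] at hl <;> omega
    rw [List.append_assoc, List.append_assoc] at h
    obtain ⟨h2, h3⟩ := List.append_inj h hlen
    subst h2
    have h4 := List.append_cancel_right h3
    cases o <;> cases o' <;> simp [foldBlock, h1, h1'] at h4 ⊢ <;> omega

/-! ### The words to be counted -/

lemma continuant_pos : ∀ l : List ℕ, (∀ x ∈ l, 0 < x) → 0 < continuant l
  | [], _ => by simp [continuant]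
  | [a], h => by simpa [continuant] using h
  | a :: b :: t, h => by
    have := continuant_pos t (fun x hx => h x (by simp [hx]))
    simp only [continuant]
    omega

lemma length_le_continuant : ∀ l : List ℕ, (∀ x ∈ l, 0 < x) → l.length ≤ continuant l
  | [], _ => by simp
  | [a], h => by simpa [continuant, Nat.succ_le_iff] using h
  | a :: b :: t, h => by
    have h1 := length_le_continuant (b :: t) (fun x hx => h x (by simp [hx]))
    have h2 := continuant_pos t (fun x hx => h x (by simp [hx]))
    have h3 : 1 * continuant (b :: t) ≤ a * continuant (b :: t) :=
      Nat.mul_le_mul_right _ (h a (by simp))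
    simp only [continuant, List.length_cons] at *
    omega

/-- Lists of bounded length over a bounded alphabet; the set counted by `f d N` lies in such a
set. -/
lemma finite_words (d N : ℕ) :
    {l : List ℕ | (∀ x ∈ l, 0 < x ∧ x < N) ∧ continuant l = d}.Finite := by
  have h1 : {l : List (Fin N) | l.length ≤ d}.Finite := List.finite_length_le _ _
  refine (h1.image (List.map Fin.val)).subset ?_
  rintro l ⟨hl, hc⟩
  refine ⟨l.attach.map (fun x => ⟨x.1, (hl x.1 x.2).2⟩), ?_, ?_⟩
  · simpa [← hc] using length_le_continuant l (fun x hx => (hl x hx).1)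
  · simp [List.map_map, Function.comp_def]

/-- The interiors `Q` of the words `e Q e` with entries below `N` and continuant `a ^ k`, where
`e = d + 1`. -/
def cores (a N d k : ℕ) : Set (List ℕ) :=
  {Q | (∀ x ∈ Q, 0 < x ∧ x < N) ∧ continuant ((d + 1) :: Q ++ [d + 1]) = a ^ k}

lemma cores_image_subset {a N d k : ℕ} (hN : d + 1 < N) :
    (fun Q => (d + 1) :: Q ++ [d + 1]) '' cores a N d k ⊆
      {l : List ℕ | (∀ x ∈ l, 0 < x ∧ x < N) ∧ continuant l = a ^ k} := by
  rintro _ ⟨Q, ⟨hQ, hc⟩, rfl⟩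
  refine ⟨?_, hc⟩
  intro x hx
  simp only [List.cons_append, List.mem_cons, List.mem_append, List.not_mem_nil, or_false] at hx
  rcases hx with rfl | hx | rfl
  · omega
  · exact hQ x hx
  · omega

lemma wrap_injective (d : ℕ) : Function.Injective (fun Q : List ℕ => (d + 1) :: Q ++ [d + 1]) := by
  intro Q Q' h
  simpa using h

lemma cores_finite {a N d k : ℕ} (hN : d + 1 < N) : (cores a N d k).Finite :=
  Set.Finite.of_finite_image ((finite_words _ _).subset (cores_image_subset hN))
    (wrap_injective d).injOn

lemma cores_ncard_le_f {a N d k : ℕ} (hN : d + 1 < N) :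
    (cores a N d k).ncard ≤ f (a ^ k) N := by
  rw [← Set.ncard_image_of_injective _ (wrap_injective d)]
  exact Set.ncard_le_ncard (cores_image_subset hN) (finite_words _ _)

lemma foldBlock_mem {N d b : ℕ} {o : Bool} (hd : 0 < d) (hN : d + 2 < N) (hb : 0 < b)
    (hbN : b ≤ N) : ∀ x ∈ foldBlock d b o, 0 < x ∧ x < N := by
  intro x hx
  by_cases h1 : b = 1 <;> cases o <;> simp [foldBlock, h1] at hx <;> omega

lemma fold_mem_cores {a N d k j : ℕ} {o : Bool} (ha : 0 < a) (hd : 0 < d) (hN : d + 2 < N)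
    (hj : a ^ j ≤ N) {Q : List ℕ} (hQ : Q ∈ cores a N d k) :
    Q ++ foldBlock d (a ^ j) o ++ Q.reverse ∈ cores a N d (2 * k + j) := by
  obtain ⟨h1, h2⟩ := hQ
  refine ⟨?_, ?_⟩
  · intro x hx
    simp only [List.mem_append, List.mem_reverse] at hx
    rcases hx with (hx | hx) | hx
    · exact h1 x hx
    · exact foldBlock_mem hd hN (pow_pos ha j) hj x hx
    · exact h1 x hx
  · have := continuant_fold ((d + 1) :: Q) d (a ^ j) (pow_pos ha j) o
    rw [h2] at this
    simp only [List.reverse_cons, List.cons_append, List.append_assoc] at this ⊢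
    rw [this]
    ring

/-- Seeds: folding `e, e + 2`, whose continuant is `(e + 1) ^ 2 = a ^ 4`. -/
lemma seed_mem_cores {a N d i : ℕ} (ha : 0 < a) (hda : d + 2 = a ^ 2)
    (hN : d + 4 < N) (hi : a ^ i ≤ N) :
    foldBlock (d + 2) (a ^ i) true ∈ cores a N d (8 + i) := by
  refine ⟨foldBlock_mem (by omega) (by omega) (pow_pos ha i) hi, ?_⟩
  have := continuant_fold [d + 1] (d + 2) (a ^ i) (pow_pos ha i) true
  have h2 : continuant ([d + 1] ++ [d + 2 + 1]) = a ^ 4 := by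
    have : a ^ 4 = (a ^ 2) ^ 2 := by ring
    rw [this, ← hda]
    simp [continuant]
    ring
  rw [h2] at this
  simp only [List.reverse_cons, List.reverse_nil, List.nil_append, List.cons_append] at this ⊢
  rw [this]
  ring

lemma cores_nonempty {a N d s : ℕ} (ha : 0 < a) (hd : 0 < d) (hda : d + 2 = a ^ 2)
    (hN : d + 4 < N) (hs : 10 ≤ s) (hsN : ∀ j ≤ s, a ^ j ≤ N) (k : ℕ) (hk : 9 ≤ k) :
    (cores a N d k).Nonempty := by
  induction k using Nat.strong_induction_on with
  | _ k ih =>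
    by_cases h : k < 18
    · obtain ⟨i, rfl⟩ : ∃ i, k = 8 + i := ⟨k - 8, by omega⟩
      exact ⟨_, seed_mem_cores ha hda hN (hsN i (by omega))⟩
    · obtain ⟨Q, hQ⟩ := ih (k / 2) (by omega) (by omega)
      have := fold_mem_cores (j := k % 2) (o := true) ha hd (by omega) (hsN _ (by omega)) hQ
      rw [Nat.div_add_mod] at this
      exact ⟨_, this⟩

/-! ### The counting recursion -/

/-- The number of `n` with `0 ≤ m - 2 n ≤ s`; these are the `n = m / 2 - i` with
`i < winLen s m`. -/
def winLen (s : ℕ) (m : ℤ) : ℕ := (s + 2 - (m % 2).toNat) / 2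

/-- The number of cores of level `m`, as a real function on the integers (only the values at
nonnegative `m` matter). -/
noncomputable def coreCount (a N d : ℕ) (m : ℤ) : ℝ := ((cores a N d m.toNat).ncard : ℝ)

lemma count_rec {a N d s : ℕ} (ha : 2 ≤ a) (hd : 2 ≤ d) (hN : d + 2 < N)
    (hsN : ∀ j ≤ s, a ^ j ≤ N) (m : ℤ) (hm : (s : ℤ) ≤ m) :
    2 * ∑ i ∈ Finset.range (winLen s m), coreCount a N d (m / 2 - i) ≤ coreCount a N d m := by
  lift m to ℕ using by omega
  have hw : winLen s m = (s + 2 - m % 2) / 2 := by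
    unfold winLen
    congr 2
  have hfin : ∀ k, (cores a N d k).Finite := fun k => cores_finite (by omega)
  have hcard : ∀ k, (cores a N d k).ncard = (hfin k).toFinset.card :=
    fun k => Set.ncard_eq_toFinset_card _ (hfin k)
  have hT : ∀ i : ℕ, coreCount a N d ((m : ℤ) / 2 - i) =
      ((hfin (m / 2 - i)).toFinset.card : ℝ) := by
    intro i
    have : ((m : ℤ) / 2 - i).toNat = m / 2 - i := by omega
    rw [coreCount, this, hcard]
  simp only [hT]
  rw [hw, coreCount, Int.toNat_natCast, hcard]
  norm_cast
  -- A triple consists of the index `i` with `j = m % 2 + 2 i`, an orientation and a core.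
  let S : Finset (Σ _ : ℕ × Bool, List ℕ) :=
    (Finset.range ((s + 2 - m % 2) / 2) ×ˢ (Finset.univ : Finset Bool)).sigma
      (fun p => (hfin (m / 2 - p.1)).toFinset)
  have hS : S.card = 2 * ∑ i ∈ Finset.range ((s + 2 - m % 2) / 2),
      (hfin (m / 2 - i)).toFinset.card := by
    simp only [S, Finset.card_sigma, Finset.sum_product, Finset.mul_sum]
    refine Finset.sum_congr rfl fun i _ => ?_
    rw [Fintype.sum_bool, two_mul]
  rw [← hS]
  refine Finset.card_le_card_of_injOn
    (fun t => t.2 ++ foldBlock d (a ^ (m % 2 + 2 * t.1.1)) t.1.2 ++ t.2.reverse) ?_ ?_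
  · rintro ⟨⟨i, o⟩, Q⟩ ht
    simp only [S, Finset.coe_sigma, Set.mem_sigma_iff, Finset.mem_coe, Finset.mem_product,
      Finset.mem_range, Finset.mem_univ, and_true, Set.Finite.mem_toFinset] at ht ⊢
    obtain ⟨hi, hQ⟩ := ht
    have := fold_mem_cores (j := m % 2 + 2 * i) (o := o) (by omega) (by omega) hN
      (hsN _ (by omega)) hQ
    have he : 2 * (m / 2 - i) + (m % 2 + 2 * i) = m := by omega
    rwa [he] at this
  · rintro ⟨⟨i, o⟩, Q⟩ _ ⟨⟨i', o'⟩, Q'⟩ _ h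
    have hp : ∀ i, 0 < a ^ i := fun i => pow_pos (by omega) i
    obtain ⟨h1, h2, h3⟩ := fold_injective hd (hp _) (hp _) h
    have h4 := Nat.pow_right_injective ha h2
    simp only at h1 h3 h4
    have h5 : i = i' := by omega
    subst h1 h3 h5
    rfl

/-! ### Growth of the recursion -/

/-- The positive operator `(A g) m = 2 ∑ g n`, over the `n` with `0 ≤ m - 2 n ≤ s`. -/
noncomputable def foldOp (s : ℕ) : Module.End ℝ (ℤ → ℝ) where
  toFun g m := 2 * ∑ i ∈ Finset.range (winLen s m), g (m / 2 - i)
  map_add' g h := by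
    ext m
    simp [Finset.sum_add_distrib, mul_add]
  map_smul' c g := by
    ext m
    simp only [Pi.smul_apply, smul_eq_mul, ← Finset.mul_sum, RingHom.id_apply]
    ring

lemma foldOp_apply (s : ℕ) (g : ℤ → ℝ) (m : ℤ) :
    foldOp s g m = 2 * ∑ i ∈ Finset.range (winLen s m), g (m / 2 - i) := rfl

lemma foldOp_mono (s : ℕ) {g h : ℤ → ℝ} (hgh : g ≤ h) : foldOp s g ≤ foldOp s h := by
  intro m
  rw [foldOp_apply, foldOp_apply]
  gcongr
  exact hgh _

lemma foldOp_pow_mono (s K : ℕ) {g h : ℤ → ℝ} (hgh : g ≤ h) :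
    (foldOp s ^ K) g ≤ (foldOp s ^ K) h := by
  induction K with
  | zero => simpa using hgh
  | succ K ih =>
    rw [pow_succ']
    exact foldOp_mono s ih

lemma foldOp_pow_le_coreCount {a N d s : ℕ} (ha : 2 ≤ a) (hd : 2 ≤ d) (hda : d + 2 = a ^ 2)
    (hN : d + 4 < N) (hs : 10 ≤ s) (hsN : ∀ j ≤ s, a ^ j ≤ N) (K : ℕ) :
    ∀ m : ℤ, 2 ^ K * (9 + s) - s ≤ m → (foldOp s ^ K) 1 m ≤ coreCount a N d m := by
  induction K with
  | zero =>
    intro m hm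
    have hne := cores_nonempty (by omega) (by omega) hda hN hs hsN m.toNat (by omega)
    have : 0 < (cores a N d m.toNat).ncard :=
      (Set.ncard_pos (cores_finite (by omega))).2 hne
    simp only [pow_zero, Module.End.one_apply, Pi.one_apply, coreCount]
    exact_mod_cast this
  | succ K ih =>
    intro m hm
    have h1 : (1 : ℤ) ≤ 2 ^ K := one_le_pow₀ (by norm_num)
    have h2 : (9 + s : ℤ) ≤ 2 ^ K * (9 + s) := by nlinarith
    have h3 : (2 : ℤ) ^ (K + 1) * (9 + s) = 2 * (2 ^ K * (9 + s)) := by ring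
    rw [h3] at hm
    refine le_trans ?_ (count_rec ha hd (by omega) hsN m (by omega))
    rw [pow_succ', Module.End.mul_apply, foldOp_apply]
    gcongr with i hi
    apply ih
    have hi' : i < (s + 2 - (m % 2).toNat) / 2 := Finset.mem_range.1 hi
    omega

/-- An interval sum of a function that changes sign under the shift by `q` reduces to its two
boundary pieces of length `q`. -/
lemma abs_sum_antiperiodic {g : ℤ → ℝ} {q : ℕ} {B : ℝ} (hg : ∀ n, g (n - q) = -g n)
    (hB : ∀ n, |g n| ≤ B) (u : ℤ) (L : ℕ) :
    |∑ i ∈ Finset.range L, g (u - i)| ≤ q * B := by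
  have tele : 2 * ∑ i ∈ Finset.range L, g (u - i) =
      ∑ i ∈ Finset.range q, g (u - i) - ∑ i ∈ Finset.range q, g (u - L - i) := by
    induction L with
    | zero => simp
    | succ L ih =>
      have h1 := Finset.sum_range_succ (fun i : ℕ => g (u - L - i)) q
      have h2 := Finset.sum_range_succ' (fun i : ℕ => g (u - L - i)) q
      have h3 : ∀ i : ℕ, g (u - L - (i + 1 : ℕ)) = g (u - (L + 1 : ℕ) - i) := by
        intro i
        congr 1
        push_cast
        ring
      simp only [h3] at h2
      have h4 := hg (u - L)
      simp only [Nat.cast_zero, sub_zero] at h2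
      rw [Finset.sum_range_succ, mul_add, ih]
      linarith
  have bd : ∀ v : ℤ, |∑ i ∈ Finset.range q, g (v - i)| ≤ q * B := by
    intro v
    refine (Finset.abs_sum_le_sum_abs _ _).trans ?_
    refine (Finset.sum_le_card_nsmul _ _ B (fun i _ => hB _)).trans ?_
    simp
  have h1 := abs_le.1 (bd u)
  have h2 := abs_le.1 (bd (u - L))
  rw [abs_le]
  constructor <;> linarith

lemma foldOp_antiperiodic (s : ℕ) {g : ℤ → ℝ} {q : ℕ} {B : ℝ} (hg : ∀ n, g (n - q) = -g n)
    (hB : ∀ n, |g n| ≤ B) :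
    (∀ n, foldOp s g (n - (2 * q : ℕ)) = -foldOp s g n) ∧
      ∀ n, |foldOp s g n| ≤ 2 * (q * B) := by
  refine ⟨fun n => ?_, fun n => ?_⟩
  · have h1 : winLen s (n - (2 * q : ℕ)) = winLen s n := by
      unfold winLen
      have : (n - (2 * q : ℕ)) % 2 = n % 2 := by omega
      rw [this]
    have h2 : (n - (2 * q : ℕ)) / 2 = n / 2 - q := by omega
    rw [foldOp_apply, foldOp_apply, h1, h2, ← mul_neg, ← Finset.sum_neg_distrib]
    congr 1
    refine Finset.sum_congr rfl fun i _ => ?_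
    rw [← hg]
    congr 1
    ring
  · rw [foldOp_apply, abs_mul, abs_two]
    have := abs_sum_antiperiodic hg hB (n / 2) (winLen s n)
    linarith

/-- The sign character `m ↦ (-1) ^ m` on the integers. -/
def signChar (m : ℤ) : ℝ := if m % 2 = 0 then 1 else -1

lemma abs_foldOp_pow_three_signChar (s : ℕ) (n : ℤ) :
    |(foldOp s ^ 3) signChar n| ≤ 64 := by
  have h0 : ∀ n, signChar (n - (1 : ℕ)) = -signChar n := by
    intro n
    unfold signChar
    split_ifs <;> first | omega | simp
  have hB : ∀ n, |signChar n| ≤ 1 := by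
    intro n
    unfold signChar
    split_ifs <;> simp
  obtain ⟨h1, hB1⟩ := foldOp_antiperiodic s h0 hB
  obtain ⟨h2, hB2⟩ := foldOp_antiperiodic s h1 hB1
  obtain ⟨-, hB3⟩ := foldOp_antiperiodic s h2 hB2
  have := hB3 n
  norm_num at this
  exact this

lemma foldOp_one (s : ℕ) : ∃ δ : ℝ, 0 ≤ δ ∧ δ ≤ 1 ∧
    foldOp s 1 = ((s : ℝ) + 1) • 1 + δ • signChar := by
  have hw : ∀ m, foldOp s 1 m = 2 * (winLen s m : ℝ) := by
    intro m
    simp [foldOp_apply]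
  rcases Nat.even_or_odd' s with ⟨t, rfl | rfl⟩
  · refine ⟨1, by norm_num, by norm_num, ?_⟩
    ext m
    rw [hw]
    rcases Int.emod_two_eq_zero_or_one m with h | h
    · have : winLen (2 * t) m = t + 1 := by simp only [winLen, h]; omega
      rw [this]
      simp [signChar, h]
      ring
    · have : winLen (2 * t) m = t := by simp only [winLen, h]; omega
      rw [this]
      simp [signChar, h]
  · refine ⟨0, by norm_num, by norm_num, ?_⟩
    ext m
    rw [hw]
    rcases Int.emod_two_eq_zero_or_one m with h | h
    · have : winLen (2 * t + 1) m = t + 1 := by simp only [winLen, h]; omega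
      rw [this]
      simp
      ring
    · have : winLen (2 * t + 1) m = t + 1 := by simp only [winLen, h]; omega
      rw [this]
      simp
      ring

lemma smul_one_le_foldOp_one (s : ℕ) : (s : ℝ) • (1 : ℤ → ℝ) ≤ foldOp s 1 := by
  obtain ⟨δ, h0, h1, h⟩ := foldOp_one s
  rw [h]
  intro m
  simp only [Pi.smul_apply, Pi.one_apply, smul_eq_mul, Pi.add_apply, signChar]
  split_ifs <;> linarith

lemma mul_foldOp_pow_le (s K : ℕ) (m : ℤ) :
    s * (foldOp s ^ K) 1 m ≤ (foldOp s ^ (K + 1)) 1 m := by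
  have := foldOp_pow_mono s K (smul_one_le_foldOp_one s) m
  rw [map_smul] at this
  rw [pow_succ, Module.End.mul_apply]
  exact this

lemma foldOp_pow_nonneg (s K : ℕ) (m : ℤ) : 0 ≤ (foldOp s ^ K) 1 m := by
  have := foldOp_pow_mono s K (g := 0) (h := 1) (fun _ => zero_le_one) m
  simpa using this

lemma foldOp_pow_step (s K : ℕ) (m : ℤ) :
    ((s : ℝ) + 1) * (foldOp s ^ (K + 3)) 1 m - 64 * (foldOp s ^ K) 1 m ≤
      (foldOp s ^ (K + 4)) 1 m := by
  obtain ⟨δ, h0, h1, h⟩ := foldOp_one s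
  have e1 : (foldOp s ^ (K + 4)) 1 =
      ((s : ℝ) + 1) • (foldOp s ^ (K + 3)) 1 + (foldOp s ^ K) (δ • (foldOp s ^ 3) signChar) := by
    rw [show K + 4 = (K + 3) + 1 from rfl, pow_succ, Module.End.mul_apply, h, map_add, map_smul,
      map_smul, map_smul, pow_add (foldOp s) K 3, Module.End.mul_apply, Module.End.mul_apply]
  have e2 : (-64 : ℝ) • (1 : ℤ → ℝ) ≤ δ • (foldOp s ^ 3) signChar := by
    intro n
    have := (abs_le.1 (abs_foldOp_pow_three_signChar s n)).1
    simp only [Pi.smul_apply, Pi.one_apply, smul_eq_mul]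
    nlinarith
  have e3 := foldOp_pow_mono s K e2 m
  rw [map_smul] at e3
  rw [e1]
  simp only [Pi.smul_apply, Pi.add_apply, smul_eq_mul] at e3 ⊢
  linarith

/-- The growth rate `s + 1 - 1 / s²` guaranteed for the recursion. -/
noncomputable def rate (s : ℕ) : ℝ := (s : ℝ) + 1 - 1 / (s : ℝ) ^ 2

lemma rate_pow_le (s : ℕ) (hs : 64 ≤ s) (K : ℕ) (m : ℤ) :
    rate s ^ K ≤ (foldOp s ^ (K + 3)) 1 m := by
  have hs' : (64 : ℝ) ≤ s := by exact_mod_cast hs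
  have hs2 : 1 / (s : ℝ) ^ 2 ≤ 1 := by
    rw [div_le_one (by positivity)]
    nlinarith
  have hcube : ∀ K, (s : ℝ) ^ 3 * (foldOp s ^ K) 1 m ≤ (foldOp s ^ (K + 3)) 1 m := by
    intro K
    have h1 := mul_foldOp_pow_le s K m
    have h2 := mul_foldOp_pow_le s (K + 1) m
    have h3 := mul_foldOp_pow_le s (K + 2) m
    calc (s : ℝ) ^ 3 * (foldOp s ^ K) 1 m = s * (s * (s * (foldOp s ^ K) 1 m)) := by ring
      _ ≤ s * (s * (foldOp s ^ (K + 1)) 1 m) := by gcongr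
      _ ≤ s * (foldOp s ^ (K + 2)) 1 m := by gcongr
      _ ≤ _ := h3
  induction K with
  | zero =>
    have := hcube 0
    simp only [pow_zero, Module.End.one_apply, Pi.one_apply, mul_one] at this ⊢
    refine le_trans ?_ this
    exact one_le_pow₀ (by linarith)
  | succ K ih =>
    have h1 := foldOp_pow_step s K m
    have h2 := hcube K
    have h3 := foldOp_pow_nonneg s K m
    have hr : 0 ≤ rate s := by unfold rate; linarith
    have h4 : 64 * (foldOp s ^ K) 1 m ≤ 1 / (s : ℝ) ^ 2 * (foldOp s ^ (K + 3)) 1 m := by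
      rw [div_mul_eq_mul_div, one_mul, le_div_iff₀ (by positivity)]
      refine le_trans ?_ h2
      have : (64 : ℝ) * (foldOp s ^ K) 1 m ≤ s * (foldOp s ^ K) 1 m := by gcongr
      nlinarith [mul_le_mul_of_nonneg_right this (sq_nonneg (s : ℝ))]
    calc rate s ^ (K + 1) = rate s * rate s ^ K := by ring
      _ ≤ rate s * (foldOp s ^ (K + 3)) 1 m := by gcongr
      _ ≤ (foldOp s ^ (K + 4)) 1 m := by
        unfold rate
        linarith

/-! ### Comparison with the largest root of the cubic -/

lemma root_bounds (s : ℕ) (hs : 64 ≤ s) (lam : ℝ)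
    (h : IsGreatestRoot (fun x : ℝ => x ^ 3 - ((s : ℝ) + 2) * x ^ 2 + (s : ℝ) * x +
      ((s : ℝ) + 4)) lam) : (s : ℝ) ≤ lam ∧ lam < rate s := by
  obtain ⟨h1, h2⟩ := h
  have hs' : (64 : ℝ) ≤ s := by exact_mod_cast hs
  refine ⟨?_, ?_⟩
  · -- The cubic is negative at `s` and equals `3` at `s + 1`.
    have hcont : ContinuousOn (fun x : ℝ => x ^ 3 - ((s : ℝ) + 2) * x ^ 2 + (s : ℝ) * x +
      ((s : ℝ) + 4)) (Set.Icc (s : ℝ) (s + 1)) := by fun_prop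
    obtain ⟨x, hx, hx0⟩ := intermediate_value_Icc (by linarith : (s : ℝ) ≤ s + 1) hcont
      (show (0 : ℝ) ∈ Set.Icc _ _ from ⟨by nlinarith, by nlinarith⟩)
    exact hx.1.trans (h2 x hx0)
  · by_contra! hge
    obtain ⟨t, rfl⟩ : ∃ t, lam = s + 1 + t := ⟨lam - s - 1, by ring⟩
    have hexp : 3 + ((s : ℝ) ^ 2 + s - 1) * t + (2 * s + 1) * t ^ 2 + t ^ 3 = 0 := by
      rw [← h1]
      ring
    have ht : -1 ≤ (s : ℝ) ^ 2 * t := by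
      have : -(1 / (s : ℝ) ^ 2) ≤ t := by unfold rate at hge; linarith
      rw [neg_le_iff_add_nonneg] at this
      have h3 := mul_nonneg (sq_nonneg (s : ℝ)) this
      have h4 : (s : ℝ) ^ 2 * (1 / (s : ℝ) ^ 2) = 1 := by field_simp
      linarith [mul_add ((s : ℝ) ^ 2) t (1 / (s : ℝ) ^ 2)]
    have ht1 : -1 ≤ s * t := by
      by_contra! hlt
      have : (s : ℝ) * (s * t) < s * (-1) := by gcongr
      nlinarith
    have ht2 : -(1 / 64) ≤ t := by nlinarith
    rcases le_or_gt 0 t with h0 | h0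
    · have : 0 ≤ ((s : ℝ) ^ 2 + s - 1) * t := mul_nonneg (by nlinarith) h0
      have : 0 ≤ (2 * (s : ℝ) + 1) * t ^ 2 := by positivity
      have : 0 ≤ t ^ 3 := by positivity
      linarith
    · have : 0 ≤ (2 * (s : ℝ) + 1 + t) * t ^ 2 := mul_nonneg (by linarith) (sq_nonneg t)
      nlinarith

theorem theorem2 :
    ∃ s₀ : ℕ, ∃ c : ℝ, 0 < c ∧
      ∀ a N : ℕ, 2 ≤ a → a ^ s₀ ≤ N →
        ∀ lam : ℝ,
          IsGreatestRoot (fun x : ℝ =>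
            x ^ 3 - ((Nat.log a N : ℝ) + 2) * x ^ 2 + (Nat.log a N : ℝ) * x +
              ((Nat.log a N : ℝ) + 4)) lam →
          ∃ M : ℕ, ∀ m : ℕ, M ≤ m →
            c * (2 : ℝ) ^ (-(5 * (Real.logb 2 (Real.logb 2 (N : ℝ))) ^ 2)) *
                (m : ℝ) ^ (Real.logb 2 lam) ≤ (f (a ^ m) N : ℝ) := by
  refine ⟨64, 1, one_pos, ?_⟩
  intro a N ha haN lam hlam
  have hN0 : N ≠ 0 := by
    have : 0 < a ^ 64 := by positivity
    omega
  have hs : 64 ≤ Nat.log a N := Nat.le_log_of_pow_le (by omega) haN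
  have hsN : ∀ j ≤ Nat.log a N, a ^ j ≤ N := fun j hj =>
    (Nat.pow_le_pow_right (by omega) hj).trans (Nat.pow_log_le_self a hN0)
  generalize Nat.log a N = s at hlam hs hsN
  obtain ⟨hl1, hl2⟩ := root_bounds s hs lam hlam
  have hs' : (64 : ℝ) ≤ s := by exact_mod_cast hs
  have hlam0 : 0 < lam := by linarith
  have hmu0 : 0 < rate s := by linarith
  have ha2 : 4 ≤ a ^ 2 := by nlinarith
  obtain ⟨d, hda⟩ : ∃ d, d + 2 = a ^ 2 := ⟨a ^ 2 - 2, by omega⟩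
  have hdN : d + 4 < N := by
    have h1 : a ^ 2 * a ^ 2 = a ^ 4 := by ring
    have h2 : a ^ 4 ≤ N := hsN 4 (by omega)
    nlinarith
  -- `m` lies between `2 ^ K * (9 + s)` and twice that number; the factor `(rate s / lam) ^ K`
  -- exceeds every constant once `K` is large.
  set B : ℝ := lam * (9 + s : ℝ) ^ (Real.logb 2 lam) * rate s ^ 3 with hBdef
  have hB0 : 0 < B := by positivity
  obtain ⟨K₀, hK₀⟩ := pow_unbounded_of_one_lt B ((one_lt_div hlam0).2 hl2)
  refine ⟨2 ^ (K₀ + 3) * (9 + s), fun m hm => ?_⟩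
  obtain ⟨K, hK⟩ : ∃ K, K = Nat.log 2 (m / (9 + s)) := ⟨_, rfl⟩
  have hq : 2 ^ (K₀ + 3) ≤ m / (9 + s) := (Nat.le_div_iff_mul_le (by omega)).2 hm
  have hq0 : m / (9 + s) ≠ 0 := by
    have : 0 < 2 ^ (K₀ + 3) := by positivity
    omega
  have hKK : K₀ + 3 ≤ K := hK ▸ Nat.le_log_of_pow_le (by norm_num) hq
  have hlow : 2 ^ K * (9 + s) ≤ m :=
    (Nat.le_div_iff_mul_le (by omega)).1 (hK ▸ Nat.pow_log_le_self 2 hq0)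
  have hup : m < 2 ^ (K + 1) * (9 + s) :=
    (Nat.div_lt_iff_lt_mul (by omega)).1 (hK ▸ Nat.lt_pow_succ_log_self (by norm_num) _)
  obtain ⟨k, rfl⟩ : ∃ k, K = k + 3 := ⟨K - 3, by omega⟩
  have hf : rate s ^ k ≤ (f (a ^ m) N : ℝ) := by
    have h1 := rate_pow_le s hs k m
    have h2 := foldOp_pow_le_coreCount (N := N) ha (by omega) hda hdN (by omega) hsN (k + 3) m
      (by
        have : ((2 ^ (k + 3) * (9 + s) : ℕ) : ℤ) ≤ m := by exact_mod_cast hlow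
        push_cast at this
        linarith)
    have h3 : coreCount a N d m ≤ (f (a ^ m) N : ℝ) := by
      simp only [coreCount, Int.toNat_natCast]
      exact_mod_cast cores_ncard_le_f (by omega)
    linarith
  have hlog : 0 ≤ Real.logb 2 lam := Real.logb_nonneg (by norm_num) (by linarith)
  have hpow : (m : ℝ) ^ (Real.logb 2 lam) ≤ lam ^ (k + 4) * (9 + s : ℝ) ^ (Real.logb 2 lam) := by
    have h1 : (m : ℝ) ≤ 2 ^ (k + 4) * (9 + s : ℝ) := by exact_mod_cast hup.le
    refine (Real.rpow_le_rpow (by positivity) h1 hlog).trans (le_of_eq ?_)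
    rw [Real.mul_rpow (by positivity) (by positivity), ← Real.rpow_natCast_mul (by norm_num),
      mul_comm ((k + 4 : ℕ) : ℝ), Real.rpow_mul_natCast (by norm_num),
      Real.rpow_logb (by norm_num) (by norm_num) hlam0]
  have hc : (2 : ℝ) ^ (-(5 * (Real.logb 2 (Real.logb 2 (N : ℝ))) ^ 2)) ≤ 1 :=
    Real.rpow_le_one_of_one_le_of_nonpos (by norm_num) 
      (neg_nonpos.2 (by positivity))
  have hgain : B ≤ (rate s / lam) ^ (k + 3) :=
    hK₀.le.trans (pow_le_pow_right₀ ((one_lt_div hlam0).2 hl2).le (by omega))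
  rw [div_pow, le_div_iff₀ (pow_pos hlam0 _)] at hgain
  have hfin : lam ^ (k + 4) * (9 + s : ℝ) ^ (Real.logb 2 lam) ≤ rate s ^ k := by
    have h3 : 0 < rate s ^ 3 := by positivity
    refine le_of_mul_le_mul_right ?_ h3
    calc lam ^ (k + 4) * (9 + s : ℝ) ^ (Real.logb 2 lam) * rate s ^ 3
        = B * lam ^ (k + 3) := by rw [hBdef]; ring
      _ ≤ rate s ^ (k + 3) := hgain
      _ = rate s ^ k * rate s ^ 3 := by ring
  calc 1 * (2 : ℝ) ^ (-(5 * (Real.logb 2 (Real.logb 2 (N : ℝ))) ^ 2)) *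
        (m : ℝ) ^ (Real.logb 2 lam)
      ≤ 1 * 1 * (m : ℝ) ^ (Real.logb 2 lam) := by gcongr
    _ = (m : ℝ) ^ (Real.logb 2 lam) := by ring
    _ ≤ _ := hpow.trans (hfin.trans hf)
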